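/- Let h : ℝⁿ → ℝ ∪ {+∞} be a proper function with convex effective domain that is locally Lipschitz on its domain, let x̄ ∈ argmin h, κ ∈ (0,1], and γ ≥ 0. If for every x ∈ dom h and every v ∈ ∂^C h(x) one has h(x̄) ≥ h(x) + (1/κ)·⟨v, x̄ − x⟩ + (γ/2)·‖x − x̄‖², then h satisfies the quadratic growth condition h(x) ≥ h(x̄) + (κγ/(2(2−κ)))·‖x − x̄‖² for all x ∈ ℝⁿ. -/

import Mathlib

/-!
Fix `x ∈ dom`, put `d = x - xbar` and `g t = h (xbar + t d) - h xbar ≥ 0` on `[0, 1]`.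

The Clarke derivative of a locally Lipschitz function is finite and sublinear in the direction, so
by Hahn-Banach some Clarke subgradient `v` attains it at the direction `-d`
(`exists_mem_clarkeSubdiff_inner_eq`). The hypothesis for this `v` at the point `xbar + t d` reads
`h°(xbar + t d; -d) ≤ -(κ g t / t + κ γ t ‖d‖² / 2)`. Since the base point in the Clarke
derivative is free to move, it also controls the right slopes of `-g` at `t`. So `-g` satisfies
a one-sided differential inequality on `(0, 1]`.

With `c = κ γ ‖d‖² / (2 (2 - κ))`, the function `-c t²` solves the corresponding equation, and
`B t = -c t² + δ t + δ t²` is a strict supersolution for `δ > 0`, because `κ ≤ 1`. For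
`δ = (c + 1) a` one has `-g a ≤ 0 ≤ B a`, so the comparison principle on `[a, 1]` gives
`-g 1 ≤ -c + 2 (c + 1) a`. Letting `a → 0` yields `g 1 ≥ c`, which is the claim.
-/

open Set Filter Topology RealInnerProductSpace

/-- Clarke directional derivative of `h` at `x` in direction `d`. -/
noncomputable def clarkeDeriv {n : ℕ} (h : EuclideanSpace ℝ (Fin n) → ℝ)
    (x d : EuclideanSpace ℝ (Fin n)) : ℝ :=
  Filter.limsup (fun p : EuclideanSpace ℝ (Fin n) × ℝ => (h (p.1 + p.2 • d) - h p.1) / p.2)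
    ((𝓝 x) ×ˢ (𝓝[>] (0:ℝ)))

/-- Clarke subdifferential of `h` at `x`. -/
def clarkeSubdiff {n : ℕ} (h : EuclideanSpace ℝ (Fin n) → ℝ)
    (x : EuclideanSpace ℝ (Fin n)) : Set (EuclideanSpace ℝ (Fin n)) :=
  {v | ∀ d, ⟪v, d⟫ ≤ clarkeDeriv h x d}

section Clarke

variable {n : ℕ} {h : EuclideanSpace ℝ (Fin n) → ℝ} {x : EuclideanSpace ℝ (Fin n)}

/-- Moving the base point `y` to `y + t d` does not change the limit `y → x`, `t ↓ 0`. -/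
lemma tendsto_clarke_shift (x d : EuclideanSpace ℝ (Fin n)) :
    Tendsto (fun p : EuclideanSpace ℝ (Fin n) × ℝ => p.1 + p.2 • d)
      ((𝓝 x) ×ˢ (𝓝[>] (0:ℝ))) (𝓝 x) := by
  have h1 : Tendsto (fun p : EuclideanSpace ℝ (Fin n) × ℝ => p.1 + p.2 • d)
      (𝓝 (x, (0:ℝ))) (𝓝 (x + (0:ℝ) • d)) := by
    apply Continuous.tendsto (f := fun p : EuclideanSpace ℝ (Fin n) × ℝ => p.1 + p.2 • d)
    fun_prop
  rw [zero_smul, add_zero, nhds_prod_eq] at h1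
  exact h1.mono_left (Filter.prod_mono le_rfl nhdsWithin_le_nhds)

lemma eventually_clarke_pos (x : EuclideanSpace ℝ (Fin n)) :
    ∀ᶠ p : EuclideanSpace ℝ (Fin n) × ℝ in (𝓝 x) ×ˢ (𝓝[>] (0:ℝ)), 0 < p.2 :=
  tendsto_snd.eventually (eventually_mem_nhdsWithin (a := (0:ℝ)) (s := Ioi 0))

/-- Near a point of local Lipschitz continuity the difference quotients are bounded, so the real
`limsup` defining the Clarke derivative does not take a junk value. -/
lemma eventually_abs_quotient_le
    (hx : ∃ (K : NNReal) (U : Set (EuclideanSpace ℝ (Fin n))), U ∈ 𝓝 x ∧ LipschitzOnWith K h U)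
    (d : EuclideanSpace ℝ (Fin n)) :
    ∃ M : ℝ, ∀ᶠ p : EuclideanSpace ℝ (Fin n) × ℝ in (𝓝 x) ×ˢ (𝓝[>] (0:ℝ)),
      |(h (p.1 + p.2 • d) - h p.1) / p.2| ≤ M := by
  obtain ⟨K, U, hU, hK⟩ := hx
  refine ⟨K * ‖d‖, ?_⟩
  filter_upwards [(tendsto_clarke_shift x d).eventually hU, tendsto_fst.eventually hU,
    eventually_clarke_pos x] with p h1 h2 h3
  have h4 := hK.dist_le_mul _ h1 _ h2
  rw [Real.dist_eq, dist_eq_norm, add_sub_cancel_left, norm_smul, Real.norm_eq_abs,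
    abs_of_pos h3] at h4
  rw [abs_div, abs_of_pos h3, div_le_iff₀ h3]
  linarith

lemma eventually_lt_of_clarkeDeriv_lt
    (hx : ∃ (K : NNReal) (U : Set (EuclideanSpace ℝ (Fin n))), U ∈ 𝓝 x ∧ LipschitzOnWith K h U)
    {d : EuclideanSpace ℝ (Fin n)} {r : ℝ} (hr : clarkeDeriv h x d < r) :
    ∀ᶠ p : EuclideanSpace ℝ (Fin n) × ℝ in (𝓝 x) ×ˢ (𝓝[>] (0:ℝ)),
      (h (p.1 + p.2 • d) - h p.1) / p.2 < r := by
  obtain ⟨M, hM⟩ := eventually_abs_quotient_le hx d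
  exact eventually_lt_of_limsup_lt hr
    (isBoundedUnder_of_eventually_le (a := M) (hM.mono fun p hp => (abs_le.1 hp).2))

lemma clarkeDeriv_le_of_eventually
    (hx : ∃ (K : NNReal) (U : Set (EuclideanSpace ℝ (Fin n))), U ∈ 𝓝 x ∧ LipschitzOnWith K h U)
    {d : EuclideanSpace ℝ (Fin n)} {r : ℝ}
    (hr : ∀ᶠ p : EuclideanSpace ℝ (Fin n) × ℝ in (𝓝 x) ×ˢ (𝓝[>] (0:ℝ)),
      (h (p.1 + p.2 • d) - h p.1) / p.2 ≤ r) :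
    clarkeDeriv h x d ≤ r := by
  obtain ⟨M, hM⟩ := eventually_abs_quotient_le hx d
  refine limsup_le_of_le ?_ hr
  exact (isBoundedUnder_of_eventually_ge (a := -M)
    (hM.mono fun p hp => (abs_le.1 hp).1)).isCoboundedUnder_le

lemma clarkeDeriv_zero : clarkeDeriv h x 0 = 0 := by
  simp [clarkeDeriv]

lemma clarkeDeriv_add_le
    (hx : ∃ (K : NNReal) (U : Set (EuclideanSpace ℝ (Fin n))), U ∈ 𝓝 x ∧ LipschitzOnWith K h U)
    (d e : EuclideanSpace ℝ (Fin n)) :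
    clarkeDeriv h x (d + e) ≤ clarkeDeriv h x d + clarkeDeriv h x e := by
  refine le_of_forall_pos_le_add fun ε hε => ?_
  have h1 := eventually_lt_of_clarkeDeriv_lt hx
    (show clarkeDeriv h x d < clarkeDeriv h x d + ε / 2 by linarith)
  have h2 := eventually_lt_of_clarkeDeriv_lt hx
    (show clarkeDeriv h x e < clarkeDeriv h x e + ε / 2 by linarith)
  -- The quotient in direction `e` is taken at the shifted base point `y + t d`.
  have h3 := ((tendsto_clarke_shift x d).prodMk tendsto_snd).eventually h2
  apply clarkeDeriv_le_of_eventually hx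
  filter_upwards [h1, h3] with p h4 h5
  have h6 : (h (p.1 + p.2 • (d + e)) - h p.1) / p.2
      = (h (p.1 + p.2 • d) - h p.1) / p.2
        + (h (p.1 + p.2 • d + p.2 • e) - h (p.1 + p.2 • d)) / p.2 := by
    rw [smul_add, ← add_assoc]; ring
  linarith

lemma clarkeDeriv_smul_le
    (hx : ∃ (K : NNReal) (U : Set (EuclideanSpace ℝ (Fin n))), U ∈ 𝓝 x ∧ LipschitzOnWith K h U)
    {c : ℝ} (hc : 0 < c) (d : EuclideanSpace ℝ (Fin n)) :
    clarkeDeriv h x (c • d) ≤ c * clarkeDeriv h x d := by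
  refine le_of_forall_pos_le_add fun ε hε => ?_
  have h1 := eventually_lt_of_clarkeDeriv_lt hx
    (show clarkeDeriv h x d < clarkeDeriv h x d + ε / c by
      have := div_pos hε hc
      linarith)
  have h2 : Tendsto (fun t : ℝ => t * c) (𝓝[>] 0) (𝓝[>] 0) := by
    refine tendsto_nhdsWithin_iff.2 ⟨?_, ?_⟩
    · have : Tendsto (fun t : ℝ => t * c) (𝓝 0) (𝓝 (0 * c)) :=
        (continuous_id.mul continuous_const).tendsto 0
      rw [zero_mul] at this
      exact this.mono_left nhdsWithin_le_nhds
    · filter_upwards [self_mem_nhdsWithin] with t ht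
      exact mul_pos ht hc
  have h3 := (tendsto_fst.prodMk (h2.comp tendsto_snd)).eventually h1
  apply clarkeDeriv_le_of_eventually hx
  filter_upwards [h3, eventually_clarke_pos x] with p h4 h5
  simp only [Function.comp] at h4
  rw [smul_smul]
  rw [div_lt_iff₀ (mul_pos h5 hc)] at h4
  rw [div_le_iff₀ h5]
  have h6 : (clarkeDeriv h x d + ε / c) * (p.2 * c) = (c * clarkeDeriv h x d + ε) * p.2 := by
    field_simp
  linarith

lemma clarkeDeriv_smul
    (hx : ∃ (K : NNReal) (U : Set (EuclideanSpace ℝ (Fin n))), U ∈ 𝓝 x ∧ LipschitzOnWith K h U)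
    {c : ℝ} (hc : 0 < c) (d : EuclideanSpace ℝ (Fin n)) :
    clarkeDeriv h x (c • d) = c * clarkeDeriv h x d := by
  refine le_antisymm (clarkeDeriv_smul_le hx hc d) ?_
  have h1 := clarkeDeriv_smul_le hx (inv_pos.2 hc) (c • d)
  rw [smul_smul, inv_mul_cancel₀ hc.ne', one_smul] at h1
  calc c * clarkeDeriv h x d ≤ c * (c⁻¹ * clarkeDeriv h x (c • d)) := by gcongr
    _ = clarkeDeriv h x (c • d) := by field_simp

/-- The Clarke derivative is the support function of the Clarke subdifferential, with the maximum
attained: Hahn-Banach extends `s • e ↦ s * h°(x; e)` below the sublinear map `h°(x; ·)`. -/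
lemma exists_mem_clarkeSubdiff_inner_eq
    (hx : ∃ (K : NNReal) (U : Set (EuclideanSpace ℝ (Fin n))), U ∈ 𝓝 x ∧ LipschitzOnWith K h U)
    {e : EuclideanSpace ℝ (Fin n)} (he : e ≠ 0) :
    ∃ v ∈ clarkeSubdiff h x, ⟪v, e⟫ = clarkeDeriv h x e := by
  obtain ⟨φ, hφ1, hφ2⟩ := exists_extension_of_le_sublinear
    (LinearPMap.mkSpanSingleton (K := ℝ) e (clarkeDeriv h x e) he) (clarkeDeriv h x)
    (fun c hc d => clarkeDeriv_smul hx hc d) (clarkeDeriv_add_le hx) (by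
      rintro ⟨y, hy⟩
      obtain ⟨s, rfl⟩ := Submodule.mem_span_singleton.1 hy
      have h0 : LinearPMap.mkSpanSingleton (K := ℝ) e (clarkeDeriv h x e) he ⟨s • e, hy⟩
          = s • clarkeDeriv h x e := LinearPMap.mkSpanSingleton'_apply _ _ _ _ _
      rw [h0, smul_eq_mul]
      dsimp only
      rcases lt_trichotomy s 0 with hs | rfl | hs
      · have h1 := clarkeDeriv_add_le hx (s • e) ((-s) • e)
        rw [← add_smul, add_neg_cancel, zero_smul, clarkeDeriv_zero,
          clarkeDeriv_smul hx (neg_pos.2 hs)] at h1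
        linarith
      · simp [clarkeDeriv_zero]
      · rw [clarkeDeriv_smul hx hs])
  refine ⟨(InnerProductSpace.toDual ℝ _).symm φ.toContinuousLinearMap, fun d => ?_, ?_⟩
  · rw [InnerProductSpace.toDual_symm_apply]
    exact hφ2 d
  · rw [InnerProductSpace.toDual_symm_apply]
    have h1 := hφ1 ⟨e, Submodule.mem_span_singleton_self e⟩
    exact h1.trans (LinearPMap.mkSpanSingleton_apply ℝ ℝ he (clarkeDeriv h x e))

/-- The Clarke derivative in direction `-d` bounds the right slopes of `s ↦ -h (w + s d)`: use
`w + z d` with `z ↓ t` as moving base point. -/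
lemma eventually_slope_lt {w d : EuclideanSpace ℝ (Fin n)} {t r : ℝ}
    (hx : ∃ (K : NNReal) (U : Set (EuclideanSpace ℝ (Fin n))),
      U ∈ 𝓝 (w + t • d) ∧ LipschitzOnWith K h U)
    (hr : clarkeDeriv h (w + t • d) (-d) < r) (m : ℝ) :
    ∀ᶠ z in 𝓝[>] t, slope (fun s : ℝ => m - h (w + s • d)) t z < r := by
  have h1 := eventually_lt_of_clarkeDeriv_lt hx hr
  have h2 : Tendsto (fun z : ℝ => w + z • d) (𝓝[>] t) (𝓝 (w + t • d)) := by
    have : Continuous fun z : ℝ => w + z • d := by fun_prop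
    exact (this.tendsto t).mono_left nhdsWithin_le_nhds
  have h3 : Tendsto (fun z : ℝ => z - t) (𝓝[>] t) (𝓝[>] 0) := by
    refine tendsto_nhdsWithin_iff.2 ⟨?_, ?_⟩
    · have : Tendsto (fun z : ℝ => z - t) (𝓝 t) (𝓝 (t - t)) :=
        (continuous_id.sub continuous_const).tendsto t
      rw [sub_self] at this
      exact this.mono_left nhdsWithin_le_nhds
    · filter_upwards [self_mem_nhdsWithin] with z hz
      exact sub_pos.2 (mem_Ioi.1 hz)
  filter_upwards [(h2.prodMk h3).eventually h1] with z hz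
  have h4 : w + z • d + (z - t) • (-d) = w + t • d := by module
  simp only [h4] at hz
  rw [slope_def_field]
  convert hz using 2
  ring

end Clarke

/-- quadratic growth from the Clarke condition.  Let `h` be proper with
convex effective domain `dom`, locally Lipschitz on `dom`, `xbar ∈ argmin h`, `κ ∈ (0,1]`,
`γ ≥ 0`.  If `h(xbar) ≥ h(x) + (1/κ) ⟪v, xbar - x⟫ + (γ/2) ‖x - xbar‖²` for every `x ∈ dom`
and `v ∈ ∂^C h(x)`, then `h(x) ≥ h(xbar) + (κγ/(2(2-κ))) ‖x - xbar‖²` for every `x`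
(which is automatic off `dom`, where `h = +∞`). -/
theorem quadratic_growth_from_clarke {n : ℕ}
    (dom : Set (EuclideanSpace ℝ (Fin n))) (h : EuclideanSpace ℝ (Fin n) → ℝ)
    (hdom : Convex ℝ dom) (hne : dom.Nonempty)
    (hlip : ∀ z ∈ dom, ∃ (K : NNReal) (U : Set (EuclideanSpace ℝ (Fin n))),
      U ∈ 𝓝 z ∧ LipschitzOnWith K h U)
    (xbar : EuclideanSpace ℝ (Fin n)) (hxbar : xbar ∈ dom)
    (hmin : ∀ y ∈ dom, h xbar ≤ h y)
    (κ γ : ℝ) (hκ : κ ∈ Ioc (0:ℝ) 1) (hγ : 0 ≤ γ)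
    (hfo : ∀ x ∈ dom, ∀ v ∈ clarkeSubdiff h x,
      h x + (1 / κ) * ⟪v, xbar - x⟫ + (γ / 2) * ‖x - xbar‖ ^ 2 ≤ h xbar) :
    ∀ x ∈ dom, h xbar + (κ * γ / (2 * (2 - κ))) * ‖x - xbar‖ ^ 2 ≤ h x := by
  intro x hx
  obtain ⟨hκ0, hκ1⟩ := hκ
  by_cases hd : x - xbar = 0
  · rw [sub_eq_zero.1 hd]
    simp
  set d := x - xbar with hd_def
  have hκ2 : 0 < 2 - κ := by linarith
  set c := κ * γ / (2 * (2 - κ)) * ‖d‖ ^ 2 with hc_def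
  have hc0 : 0 ≤ c := by positivity
  have hc : (2 - κ) * c = κ * γ / 2 * ‖d‖ ^ 2 := by
    rw [hc_def]
    field_simp
  have hmem : ∀ t ∈ Icc (0:ℝ) 1, xbar + t • d ∈ dom := fun t ht =>
    hdom.add_smul_sub_mem hxbar hx ht
  -- The first-order condition at a subgradient attaining the Clarke derivative at `-d`.
  have hclarke : ∀ t ∈ Ioc (0:ℝ) 1, clarkeDeriv h (xbar + t • d) (-d)
      ≤ κ * (h xbar - h (xbar + t • d)) / t - κ * γ / 2 * ‖d‖ ^ 2 * t := by
    intro t ht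
    have htd := hmem t ⟨ht.1.le, ht.2⟩
    obtain ⟨v, hv, hve⟩ := exists_mem_clarkeSubdiff_inner_eq (hlip _ htd) (neg_ne_zero.2 hd)
    have h1 := hfo _ htd v hv
    have h2 : xbar - (xbar + t • d) = t • (-d) := by module
    rw [h2, inner_smul_right, hve, add_sub_cancel_left, norm_smul, Real.norm_eq_abs, mul_pow,
      sq_abs] at h1
    have ht0 := ht.1
    have h3 : (1 / κ) * (t * clarkeDeriv h (xbar + t • d) (-d))
        ≤ h xbar - h (xbar + t • d) - γ / 2 * (t ^ 2 * ‖d‖ ^ 2) := by linarith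
    have h4 := mul_le_mul_of_nonneg_left h3 (div_nonneg hκ0.le ht0.le)
    calc clarkeDeriv h (xbar + t • d) (-d)
        = κ / t * ((1 / κ) * (t * clarkeDeriv h (xbar + t • d) (-d))) := by field_simp
      _ ≤ _ := h4
      _ = _ := by field_simp
  have hcont : ContinuousOn (fun s : ℝ => h xbar - h (xbar + s • d)) (Icc 0 1) := by
    intro t ht
    obtain ⟨K, U, hU, hK⟩ := hlip _ (hmem t ht)
    have h1 : ContinuousAt h (xbar + t • d) := hK.continuousOn.continuousAt hU
    have h2 : ContinuousAt (fun s : ℝ => xbar + s • d) t := by fun_prop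
    exact (continuousAt_const.sub
      (ContinuousAt.comp (f := fun s : ℝ => xbar + s • d) h1 h2)).continuousWithinAt
  have hcomp : ∀ a ∈ Ioo (0:ℝ) 1, h xbar - h x ≤ -c + 2 * (c + 1) * a := by
    intro a ha
    obtain ⟨ha0, ha1⟩ := ha
    set δ := (c + 1) * a with hδ
    have hδ0 : 0 < δ := by positivity
    have hsub : ∀ t ∈ Ico a 1, t ∈ Ioc (0:ℝ) 1 := fun t ht => ⟨ha0.trans_le ht.1, ht.2.le⟩
    have key := image_le_of_liminf_slope_right_lt_deriv_boundary
      (f := fun s : ℝ => h xbar - h (xbar + s • d))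
      (f' := fun t => κ * (h xbar - h (xbar + t • d)) / t - κ * γ / 2 * ‖d‖ ^ 2 * t)
      (a := a) (b := 1) (hcont.mono (Icc_subset_Icc_left ha0.le))
      (fun t ht r hr => (eventually_slope_lt (hlip _ (hmem t ⟨(hsub t ht).1.le, (hsub t ht).2⟩))
        ((hclarke t (hsub t ht)).trans_lt hr) (h xbar)).frequently)
      (B := fun t => -c * t ^ 2 + δ * t + δ * t ^ 2)
      (B' := fun t => -2 * c * t + δ + 2 * δ * t)
      (by
        have h1 := hmin _ (hmem a ⟨ha0.le, ha1.le⟩)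
        have h2 : -c * a ^ 2 + δ * a + δ * a ^ 2 = a ^ 2 + δ * a ^ 2 := by rw [hδ]; ring
        have h3 : 0 ≤ a ^ 2 + δ * a ^ 2 := by positivity
        linarith)
      (fun t => by
        have h1 := (((hasDerivAt_pow 2 t).const_mul (-c)).add
          ((hasDerivAt_id t).const_mul δ)).add ((hasDerivAt_pow 2 t).const_mul δ)
        refine h1.congr_deriv ?_
        push_cast
        ring)
      (by
        intro t ht heq
        have ht0 := (hsub t ht).1
        rw [heq, ← hc]
        have h1 : κ * (-c * t ^ 2 + δ * t + δ * t ^ 2) / t - (2 - κ) * c * t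
            = -2 * c * t + κ * (δ + δ * t) := by field_simp; ring
        rw [h1]
        have h2 : 0 < δ * t := by positivity
        nlinarith)
      (right_mem_Icc.2 ha1.le)
    have hx1 : xbar + (1:ℝ) • d = x := by rw [hd_def]; module
    rw [hx1] at key
    linarith
  have hlim : Tendsto (fun a : ℝ => -c + 2 * (c + 1) * a) (𝓝[>] 0) (𝓝 (-c)) := by
    have h1 : Tendsto (fun a : ℝ => -c + 2 * (c + 1) * a) (𝓝 0) (𝓝 (-c + 2 * (c + 1) * 0)) :=
      Continuous.tendsto (by fun_prop) 0
    rw [mul_zero, add_zero] at h1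
    exact h1.mono_left nhdsWithin_le_nhds
  have hfin : h xbar - h x ≤ -c := by
    refine ge_of_tendsto hlim ?_
    filter_upwards [Ioo_mem_nhdsGT (zero_lt_one' ℝ)] with a ha
    exact hcomp a ha
  linarith
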